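/- Let r ≥ 1 and let [a₁:b₁],…,[a_r:b_r] be pairwise distinct points of ℙ¹(K), giving r pairwise disjoint lines of one ruling of the smooth quadric Q = V(x₀x₃ − x₁x₂) ⊂ ℙ³ with ideals Pᵢ = (bᵢx₀ − aᵢx₁, bᵢx₂ − aᵢx₃). Then the Hartshorne–Rao module M(C) of the union C of these lines has the Weak Lefschetz Property: there exists a linear form L ∈ [R]₁ (equivalently, a general linear form works) such that ×L : [M(C)]_{t−1} → [M(C)]_t has maximal rank (is injective or surjective) for every integer t. -/

import Mathlib

/-! The linear form is `L = x₀ + x₃`. The plane `L = 0` cuts `Q` in the smooth conic parametrized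
by `[a:b] ↦ (ab, b², -a², -ab)`, which meets the line `λ_{[a:b]}` exactly in the point with
parameter `[a:b]` (`conicPt`). Forms of degree `n` in `R` restrict to the conic as binary forms of
degree `2n`: all binary forms of degree `2n` occur (`conicMon`), and a form restricting to zero
lies in the ideal `(L, x₀x₃ - x₁x₂)` (`exists_conic_form`).

For `×L : [M(C)]_t → [M(C)]_{t+1}` put `N = 2(t + 1)`.

* If `r ≥ N + 1`, the map is injective. A relation `L fᵢ ≡ G mod Pᵢ` for all `i` makes `G` vanish
  at the `r` points of the conic, so the binary form of degree `N` given by `G` is zero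
  (`binary_form_eq_zero`) and `G = L F + (x₀x₃ - x₁x₂) A`. As the quadric contains the lines and
  `L` is a non-zero-divisor modulo `Pᵢ` (`quadLine_cancel`), `fᵢ ≡ F mod Pᵢ` for all `i`.
* If `r ≤ N + 1`, the map is surjective. Given `gᵢ` of degree `t + 1`, interpolation
  (`binary_form_interpolate`) gives a form `G` with the same values as the `gᵢ` at the `r` points,
  and then `gᵢ - G ∈ Pᵢ + (L)` (`exists_factor_of_eval_eq_zero`).

Both statements on binary forms come from the projective Vandermonde determinant. -/

open MvPolynomial Module

noncomputable section

variable {K : Type} [Field K]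

abbrev Rp (K : Type) [Field K] := MvPolynomial (Fin 4) K

/-- The ideal of the line `λ_{[a:b]}` of one ruling of the quadric
`Q = V(x₀x₃ - x₁x₂)`. -/
def quadLine (a b : K) : Ideal (Rp K) :=
  Ideal.span {C b * X 0 - C a * X 1, C b * X 2 - C a * X 3}

/-- The product of the coordinate rings of the lines. -/
abbrev Dmod (K : Type) [Field K] {ι : Type} (P : ι → Ideal (Rp K)) :=
  (i : ι) → (Rp K ⧸ P i)

/-- The natural map `R → ⊕ᵢ R/Pᵢ`. -/
def Phi {ι : Type} (P : ι → Ideal (Rp K)) : Rp K →ₗ[Rp K] Dmod K P :=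
  LinearMap.pi fun i => (P i).mkQ

/-- The Hartshorne–Rao module of the union of the (disjoint) lines with ideals `Pᵢ`:
the cokernel of `R → ⊕ᵢ R/Pᵢ`. -/
abbrev HRmod {ι : Type} (P : ι → Ideal (Rp K)) :=
  Dmod K P ⧸ LinearMap.range (Phi P)

/-- The degree-`t` component `[M(C)]_t = coker([R]_t → ⊕ᵢ [R/Pᵢ]_t)` of the
Hartshorne–Rao module, realized as a `K`-subspace of the cokernel module. -/
def HRcomp {ι : Type} (P : ι → Ideal (Rp K)) (t : ℕ) : Submodule K (HRmod P) :=
  Submodule.map ((LinearMap.range (Phi P)).mkQ.restrictScalars K)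
    (Submodule.pi Set.univ fun i =>
      Submodule.map (((P i).mkQ).restrictScalars K) (homogeneousSubmodule (Fin 4) K t))


/-- `×L^m : [M(C)]_{t-m} → [M(C)]_t` has maximal rank (is injective or surjective)
for every integer `t` (in degrees where the source is zero this is automatic). -/
def MaxRankPow {ι : Type} (P : ι → Ideal (Rp K)) (L : Rp K) (m : ℕ) : Prop :=
  ∀ t : ℕ,
    (∀ x ∈ HRcomp P t, (L ^ m) • x = 0 → x = 0) ∨
    (∀ y ∈ HRcomp P (t + m), ∃ x ∈ HRcomp P t, (L ^ m) • x = y)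

/-! ### The conic cut out by `x₀ + x₃` -/

/-- The point where the line `λ_{[a:b]}` meets the plane `x₀ + x₃ = 0`. -/
def conicPt (a b : K) : Fin 4 → K := ![a * b, b ^ 2, -a ^ 2, -(a * b)]

/-- For `k ≤ 2 * n`, a form of degree `n` whose value at `conicPt a b` is
`a ^ k * b ^ (2 * n - k)`. -/
def conicMon (K : Type) [Field K] (n k : ℕ) : Rp K :=
  (-X 2) ^ (k / 2) * X 1 ^ ((2 * n - k) / 2) * X 0 ^ (k % 2)

lemma conicMon_mem (n k : ℕ) (hk : k ≤ 2 * n) :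
    conicMon K n k ∈ homogeneousSubmodule (Fin 4) K n := by
  rw [mem_homogeneousSubmodule]
  have h := (((isHomogeneous_X K (2 : Fin 4)).neg.pow (k / 2)).mul
    ((isHomogeneous_X K (1 : Fin 4)).pow ((2 * n - k) / 2))).mul
    ((isHomogeneous_X K (0 : Fin 4)).pow (k % 2))
  have e : 1 * (k / 2) + 1 * ((2 * n - k) / 2) + 1 * (k % 2) = n := by omega
  rw [e] at h
  exact h

lemma eval_conicMon (n k : ℕ) (hk : k ≤ 2 * n) (a b : K) :
    eval (conicPt a b) (conicMon K n k) = a ^ k * b ^ (2 * n - k) := by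
  have e1 : k = 2 * (k / 2) + k % 2 := by omega
  have e2 : 2 * n - k = 2 * ((2 * n - k) / 2) + k % 2 := by omega
  have h : eval (conicPt a b) (conicMon K n k)
      = (a ^ 2) ^ (k / 2) * (b ^ 2) ^ ((2 * n - k) / 2) * (a * b) ^ (k % 2) := by
    simp [conicMon, conicPt]
  rw [h]
  conv_rhs => rw [e2]; arg 1; rw [e1]
  simp only [pow_add, pow_mul, mul_pow]
  ring

/-- The reduction of a monomial modulo `x₃ = -x₀` and `x₀x₃ = x₁x₂`, i.e. modulo
`x₀² = -x₁x₂`. -/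
lemma monomial_reduce {A : Type*} [CommRing A] (x0 x1 x2 x3 : A) (h3 : x0 + x3 = 0)
    (hq : x0 * x3 - x1 * x2 = 0) (i j k l : ℕ) :
    x0 ^ i * x1 ^ j * x2 ^ k * x3 ^ l = (-1) ^ (l + k) *
      ((-x2) ^ (k + (i + l) / 2) * x1 ^ (j + (i + l) / 2) * x0 ^ ((i + l) % 2)) := by
  have e3 : x3 = -x0 := by linear_combination h3
  have e0 : x0 ^ 2 = x1 * (-x2) := by rw [e3] at hq; linear_combination -hq
  have e : x0 ^ (i + l) = (x1 * (-x2)) ^ ((i + l) / 2) * x0 ^ ((i + l) % 2) := by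
    rw [← e0, ← pow_mul, ← pow_add, Nat.div_add_mod]
  have s : (x2 : A) ^ k = (-1) ^ k * (-x2) ^ k := by rw [← mul_pow]; simp
  calc x0 ^ i * x1 ^ j * x2 ^ k * x3 ^ l
      = (-1) ^ l * x1 ^ j * x2 ^ k * x0 ^ (i + l) := by
        rw [e3, neg_pow, pow_add]; ring
    _ = _ := by
        rw [e, s, mul_pow]; simp only [pow_add]; ring

/-- Modulo the ideal of the conic `x₀ + x₃ = x₀x₃ - x₁x₂ = 0`, every form of degree `n` is a
linear combination of the `2n + 1` forms `conicMon K n k`. -/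
lemma exists_conic_form (n : ℕ) (G : Rp K) (hG : G ∈ homogeneousSubmodule (Fin 4) K n) :
    ∃ (c : Fin (2 * n + 1) → K) (A F : Rp K),
      G = ∑ k, C (c k) * conicMon K n k.1 + (X 0 + X 3) * F
        + (X 0 * X 3 - X 1 * X 2) * A := by
  let J : Ideal (Rp K) := Ideal.span {X 0 + X 3, X 0 * X 3 - X 1 * X 2}
  let T : Submodule K (Rp K) :=
    Submodule.span K (Set.range fun k : Fin (2 * n + 1) => conicMon K n k.1) ⊔
      J.restrictScalars K
  have hmon : ∀ d : Fin 4 →₀ ℕ, d.degree = n → ∀ c : K, monomial d c ∈ T := by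
    intro d hd c
    have hsum : d 0 + d 1 + d 2 + d 3 = n := by
      rw [← hd, Finsupp.degree_eq_sum, Fin.sum_univ_four]
    have hm : monomial d c = c • (X 0 ^ d 0 * X 1 ^ d 1 * X 2 ^ d 2 * X 3 ^ d 3 : Rp K) := by
      rw [monomial_eq, Finsupp.prod_fintype _ _ (by simp), Fin.prod_univ_four, smul_eq_C_mul]
    rw [hm]
    refine T.smul_mem _ ?_
    set kk := d 0 + d 3 + 2 * d 2 with hkk
    have hle : kk < 2 * n + 1 := by omega
    have q1 : kk / 2 = d 2 + (d 0 + d 3) / 2 := by omega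
    have q2 : (2 * n - kk) / 2 = d 1 + (d 0 + d 3) / 2 := by omega
    have q3 : kk % 2 = (d 0 + d 3) % 2 := by omega
    have hdiff : (X 0 ^ d 0 * X 1 ^ d 1 * X 2 ^ d 2 * X 3 ^ d 3 : Rp K)
        - (-1) ^ (d 3 + d 2) * conicMon K n kk ∈ J := by
      rw [← Ideal.Quotient.eq_zero_iff_mem, map_sub, sub_eq_zero]
      have h3 : Ideal.Quotient.mk J (X 0 + X 3) = 0 :=
        Ideal.Quotient.eq_zero_iff_mem.2 (Ideal.subset_span (by simp))
      have hq : Ideal.Quotient.mk J (X 0 * X 3 - X 1 * X 2) = 0 :=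
        Ideal.Quotient.eq_zero_iff_mem.2 (Ideal.subset_span (by simp))
      simp only [map_add, map_sub, map_mul] at h3 hq
      have := monomial_reduce _ _ _ _ h3 hq (d 0) (d 1) (d 2) (d 3)
      simp only [conicMon, q1, q2, q3, map_mul, map_pow, map_neg, map_one]
      exact this
    rw [← sub_add_cancel (X 0 ^ d 0 * X 1 ^ d 1 * X 2 ^ d 2 * X 3 ^ d 3 : Rp K)
      ((-1) ^ (d 3 + d 2) * conicMon K n kk)]
    refine T.add_mem (Submodule.mem_sup_right hdiff) (Submodule.mem_sup_left ?_)
    have : ((-1) ^ (d 3 + d 2) * conicMon K n kk : Rp K)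
        = ((-1 : K) ^ (d 3 + d 2)) • conicMon K n kk := by
      rw [smul_eq_C_mul]; simp
    rw [this]
    exact Submodule.smul_mem _ _ (Submodule.subset_span ⟨⟨kk, hle⟩, rfl⟩)
  have hT : G ∈ T := by
    rw [G.as_sum]
    refine T.sum_mem fun d hd => hmon d ?_ _
    have := hG (mem_support_iff.1 hd)
    rwa [Finsupp.degree_eq_weight_one]
  obtain ⟨y, hy, z, hz, rfl⟩ := Submodule.mem_sup.1 hT
  obtain ⟨c, rfl⟩ := (Submodule.mem_span_range_iff_exists_fun K).1 hy
  obtain ⟨F, A, rfl⟩ := Ideal.mem_span_pair.1 ((Submodule.restrictScalars_mem K J z).1 hz)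
  refine ⟨c, A, F, ?_⟩
  simp only [smul_eq_C_mul]
  ring

/-! ### Binary forms: zeros and interpolation -/

lemma det_projVandermonde_ne_zero {N : ℕ} {a b : Fin N → K}
    (hdist : ∀ i j, i ≠ j → a i * b j - a j * b i ≠ 0) :
    (Matrix.projVandermonde a b).det ≠ 0 := by
  rw [Matrix.det_projVandermonde]
  refine Finset.prod_ne_zero_iff.2 fun i _ => Finset.prod_ne_zero_iff.2 fun j hj => ?_
  exact hdist j i (Finset.mem_Ioi.1 hj).ne'

/-- A binary form of degree `N` with more than `N` zeros on `ℙ¹` vanishes. -/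
lemma binary_form_eq_zero {N r : ℕ} (hr : N + 1 ≤ r) {a b : Fin r → K}
    (hdist : ∀ i j, i ≠ j → a i * b j - a j * b i ≠ 0) (c : Fin (N + 1) → K)
    (hc : ∀ i, ∑ k, c k * (a i ^ k.1 * b i ^ (N - k.1)) = 0) : c = 0 := by
  let e := Fin.castLE hr
  refine Matrix.eq_zero_of_mulVec_eq_zero
    (det_projVandermonde_ne_zero (a := a ∘ e) (b := b ∘ e) fun i j hij =>
      hdist _ _ fun h => hij (Fin.castLE_injective hr h)) ?_
  ext i
  simp only [Matrix.mulVec, dotProduct, Matrix.projVandermonde_apply, Pi.zero_apply]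
  rw [← hc (e i)]
  refine Finset.sum_congr rfl fun k _ => ?_
  have : (k.rev : ℕ) = N - k.1 := by rw [Fin.val_rev]; omega
  rw [this, mul_comm]; rfl

/-- Binary forms of degree `N` interpolate arbitrary values at `r ≤ N + 1` points of `ℙ¹`.
Further points are adjoined until the Vandermonde matrix is square. -/
lemma binary_form_interpolate [Infinite K] {N : ℕ} (m : ℕ) : ∀ {r : ℕ}, r + m = N + 1 →
    ∀ {a b : Fin r → K}, (∀ i, (a i, b i) ≠ (0, 0)) →
    (∀ i j, i ≠ j → a i * b j - a j * b i ≠ 0) → ∀ v : Fin r → K,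
    ∃ c : Fin (N + 1) → K, ∀ i, ∑ k, c k * (a i ^ k.1 * b i ^ (N - k.1)) = v i := by
  induction m with
  | zero =>
    intro r hr a b _ hdist v
    obtain rfl : r = N + 1 := by omega
    have hu : IsUnit (Matrix.projVandermonde a b) :=
      (Matrix.isUnit_iff_isUnit_det _).2 (det_projVandermonde_ne_zero hdist).isUnit
    obtain ⟨c, hc⟩ := Matrix.mulVec_surjective_iff_isUnit.2 hu v
    refine ⟨c, fun i => ?_⟩
    rw [← hc]
    simp only [Matrix.mulVec, dotProduct, Matrix.projVandermonde_apply]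
    refine Finset.sum_congr rfl fun k _ => ?_
    have : (k.rev : ℕ) = N - k.1 := by rw [Fin.val_rev]; omega
    rw [this, mul_comm]
  | succ m ih =>
    intro r hr a b hnz hdist v
    obtain ⟨x, hx⟩ := (Set.finite_range fun j => b j / a j).exists_notMem
    -- `[1 : x]` is a new point of `ℙ¹`
    have hx' : ∀ j, b j - a j * x ≠ 0 := by
      intro j h
      by_cases ha : a j = 0
      · exact hnz j (by simp_all)
      · exact hx ⟨j, by field_simp; linear_combination h⟩
    obtain ⟨c, hc⟩ := @ih (r + 1) (by omega) (Fin.cons 1 a) (Fin.cons x b)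
      (by
        intro i
        induction i using Fin.cases with
        | zero => simp
        | succ i => simpa using hnz i)
      (by
        intro i j hij
        induction i using Fin.cases with
        | zero =>
          induction j using Fin.cases with
          | zero => exact absurd rfl hij
          | succ j => simpa using hx' j
        | succ i =>
          induction j using Fin.cases with
          | zero =>
            intro h
            simp only [Fin.cons_succ, Fin.cons_zero] at h
            exact hx' i (by linear_combination -h)
          | succ j => simpa using hdist i j (by rintro rfl; exact hij rfl))
      (Fin.cons 0 v)
    exact ⟨c, fun i => by simpa using hc i.succ⟩

/-! ### The ideal of a single line -/

section Line

attribute [local instance] MvPolynomial.gradedAlgebra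

variable {a b : K}

lemma exists_bezout (h : (a, b) ≠ (0, 0)) : ∃ α β : K, α * a + β * b = 1 := by
  by_cases ha : a = 0
  · have hb : b ≠ 0 := by rintro rfl; exact h (by rw [ha])
    exact ⟨0, b⁻¹, by simp [hb]⟩
  · exact ⟨a⁻¹, 0, by simp [ha]⟩

lemma quadLine_gen_left : (C b * X 0 - C a * X 1 : Rp K) ∈ quadLine a b :=
  Ideal.subset_span (by simp)

lemma quadLine_gen_right : (C b * X 2 - C a * X 3 : Rp K) ∈ quadLine a b :=
  Ideal.subset_span (by simp)

lemma C_bezout {α β : K} (h : α * a + β * b = 1) :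
    (C α * C a + C β * C b : Rp K) = 1 := by
  rw [← C_mul, ← C_mul, ← C_add, h, C_1]

lemma quadric_mem_quadLine (h : (a, b) ≠ (0, 0)) :
    (X 0 * X 3 - X 1 * X 2 : Rp K) ∈ quadLine a b := by
  obtain ⟨α, β, hαβ⟩ := exists_bezout h
  have hC := C_bezout hαβ
  have e : (X 0 * X 3 - X 1 * X 2 : Rp K)
      = (C α * X 2 + C β * X 3) * (C b * X 0 - C a * X 1)
        + (-(C α * X 0) - C β * X 1) * (C b * X 2 - C a * X 3) := by
    linear_combination (-(X 0 * X 3 - X 1 * X 2 : Rp K)) * hC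
  rw [e]
  exact Ideal.add_mem _ (Ideal.mul_mem_left _ _ quadLine_gen_left)
    (Ideal.mul_mem_left _ _ quadLine_gen_right)

lemma eval_conicPt_of_mem {p : Rp K} (hp : p ∈ quadLine a b) : eval (conicPt a b) p = 0 := by
  obtain ⟨f, g, rfl⟩ := Ideal.mem_span_pair.1 hp
  simp [conicPt]
  ring

/-- The form `x₀ + x₃` does not vanish on the line `λ_{[a:b]}`, hence is a non-zero-divisor
modulo its (prime) ideal. The proof uses the parametrization `(s, u) ↦ (as, bs, au, bu)`. -/
lemma quadLine_cancel (h : (a, b) ≠ (0, 0)) {f : Rp K}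
    (hf : (X 0 + X 3) * f ∈ quadLine a b) : f ∈ quadLine a b := by
  obtain ⟨α, β, hαβ⟩ := exists_bezout h
  have hC := C_bezout hαβ
  let φ : Rp K →ₐ[K] MvPolynomial (Fin 2) K :=
    aeval ![C a * X 0, C b * X 0, C a * X 1, C b * X 1]
  let σ : MvPolynomial (Fin 2) K →ₐ[K] Rp K :=
    aeval ![C α * X 0 + C β * X 1, C α * X 2 + C β * X 3]
  have hker : ∀ p ∈ quadLine a b, φ p = 0 := by
    intro p hp
    obtain ⟨f, g, rfl⟩ := Ideal.mem_span_pair.1 hp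
    simp [φ, algHom_C]
    ring
  -- `σ` splits `φ` modulo the ideal of the line
  have hsplit : ∀ p, Ideal.Quotient.mk (quadLine a b) (σ (φ p))
      = Ideal.Quotient.mk (quadLine a b) p := by
    have key : ((Ideal.Quotient.mkₐ K (quadLine a b)).comp (σ.comp φ))
        = Ideal.Quotient.mkₐ K (quadLine a b) := by
      refine algHom_ext fun i => ?_
      simp only [AlgHom.comp_apply, Ideal.Quotient.mkₐ_eq_mk]
      rw [Ideal.Quotient.eq]
      fin_cases i
      · have : σ (φ (X 0)) - X 0 = (-C β) * (C b * X 0 - C a * X 1) := by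
          simp [φ, σ, algHom_C]
          linear_combination (X 0 : Rp K) * hC
        exact this ▸ Ideal.mul_mem_left _ _ quadLine_gen_left
      · have : σ (φ (X 1)) - X 1 = C α * (C b * X 0 - C a * X 1) := by
          simp [φ, σ, algHom_C]
          linear_combination (X 1 : Rp K) * hC
        exact this ▸ Ideal.mul_mem_left _ _ quadLine_gen_left
      · have : σ (φ (X 2)) - X 2 = (-C β) * (C b * X 2 - C a * X 3) := by
          simp [φ, σ, algHom_C]
          linear_combination (X 2 : Rp K) * hC
        exact this ▸ Ideal.mul_mem_left _ _ quadLine_gen_right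
      · have : σ (φ (X 3)) - X 3 = C α * (C b * X 2 - C a * X 3) := by
          simp [φ, σ, algHom_C]
          linear_combination (X 3 : Rp K) * hC
        exact this ▸ Ideal.mul_mem_left _ _ quadLine_gen_right
    intro p
    exact DFunLike.congr_fun key p
  have hL : φ (X 0 + X 3) ≠ 0 := by
    intro h0
    have e : φ (X 0 + X 3) = C a * X 0 + C b * X 1 := by simp [φ]
    rw [e] at h0
    have h1 := congrArg (eval ![(1 : K), 0]) h0
    have h2 := congrArg (eval ![(0 : K), 1]) h0
    simp at h1 h2
    exact h (by rw [h1, h2])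
  have h0 : φ f = 0 := by
    have := hker _ hf
    rw [map_mul] at this
    exact (mul_eq_zero.1 this).resolve_left hL
  rw [← Ideal.Quotient.eq_zero_iff_mem, ← hsplit, h0, map_zero, map_zero]

open DirectSum in
lemma decompose_mem_quadLine {p : Rp K} (hp : p ∈ quadLine a b) (n : ℕ) :
    (decompose (homogeneousSubmodule (Fin 4) K) p n : Rp K) ∈ quadLine a b := by
  have hh : (quadLine a b).IsHomogeneous (homogeneousSubmodule (Fin 4) K) := by
    refine Ideal.homogeneous_span _ _ ?_
    rintro x (rfl | rfl)
    · exact ⟨1, by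
        simpa [mem_homogeneousSubmodule] using
          ((isHomogeneous_X K (0 : Fin 4)).C_mul b).sub ((isHomogeneous_X K 1).C_mul a)⟩
    · exact ⟨1, by
        simpa [mem_homogeneousSubmodule] using
          ((isHomogeneous_X K (2 : Fin 4)).C_mul b).sub ((isHomogeneous_X K 3).C_mul a)⟩
  exact hh n hp

lemma linForm_mem : (X 0 + X 3 : Rp K) ∈ homogeneousSubmodule (Fin 4) K 1 := by
  rw [mem_homogeneousSubmodule]
  exact (isHomogeneous_X K 0).add (isHomogeneous_X K 3)

/-- On the point where the line `bx₀ = ax₁, bx₂ = ax₃` meets `x₀ + x₃ = 0`, the coordinates are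
the entries of `conicPt a b` times a linear form. -/
lemma point_relations {A : Type*} [CommRing A] {a b α β x0 x1 x2 x3 : A}
    (h1 : b * x0 - a * x1 = 0) (h2 : b * x2 - a * x3 = 0) (h3 : x0 + x3 = 0)
    (h : α * a + β * b = 1) :
    x0 = a * b * (-(α ^ 2 * x2) + α * β * (x0 - x3) + β ^ 2 * x1) ∧
    x1 = b ^ 2 * (-(α ^ 2 * x2) + α * β * (x0 - x3) + β ^ 2 * x1) ∧
    x2 = -a ^ 2 * (-(α ^ 2 * x2) + α * β * (x0 - x3) + β ^ 2 * x1) ∧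
    x3 = -(a * b) * (-(α ^ 2 * x2) + α * β * (x0 - x3) + β ^ 2 * x1) := by
  refine ⟨?_, ?_, ?_, ?_⟩ <;> grind

/-- A form vanishing at the point where `λ_{[a:b]}` meets `x₀ + x₃ = 0` lies in the ideal of
that point, which is generated by `quadLine a b` and `x₀ + x₃`. -/
lemma exists_factor_of_eval_eq_zero (h : (a, b) ≠ (0, 0)) {n : ℕ} {H : Rp K}
    (hH : H ∈ homogeneousSubmodule (Fin 4) K (n + 1)) (h0 : eval (conicPt a b) H = 0) :
    ∃ f ∈ homogeneousSubmodule (Fin 4) K n, H - (X 0 + X 3) * f ∈ quadLine a b := by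
  obtain ⟨α, β, hαβ⟩ := exists_bezout h
  have hC := C_bezout hαβ
  let J : Ideal (Rp K) := quadLine a b ⊔ Ideal.span {X 0 + X 3}
  let π := Ideal.Quotient.mkₐ K J
  -- a linear form taking the value `1` at the point
  let z : Rp K := -(C α ^ 2 * X 2) + C α * C β * (X 0 - X 3) + C β ^ 2 * X 1
  have r1 : π (C b * X 0 - C a * X 1) = 0 :=
    Ideal.Quotient.eq_zero_iff_mem.2 (Ideal.mem_sup_left quadLine_gen_left)
  have r2 : π (C b * X 2 - C a * X 3) = 0 :=
    Ideal.Quotient.eq_zero_iff_mem.2 (Ideal.mem_sup_left quadLine_gen_right)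
  have r3 : π (X 0 + X 3) = 0 :=
    Ideal.Quotient.eq_zero_iff_mem.2 (Ideal.mem_sup_right (Ideal.subset_span (by simp)))
  have hCπ := congrArg π hC
  simp only [map_add, map_sub, map_mul, map_one] at r1 r2 r3 hCπ
  obtain ⟨e0, e1, e2, e3⟩ := point_relations r1 r2 r3 hCπ
  have key : π = (aeval fun j => conicPt a b j • π z) := by
    refine algHom_ext fun j => ?_
    rw [aeval_X, ← map_smul, smul_eq_C_mul]
    fin_cases j
    · change π (X 0) = π (C (a * b) * z)
      simpa only [z, C_mul, map_add, map_sub, map_mul, map_neg, map_pow] using e0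
    · change π (X 1) = π (C (b ^ 2) * z)
      simpa only [z, C_pow, map_add, map_sub, map_mul, map_neg, map_pow] using e1
    · change π (X 2) = π (C (-a ^ 2) * z)
      simpa only [z, C_neg, C_pow, map_add, map_sub, map_mul, map_neg, map_pow] using e2
    · change π (X 3) = π (C (-(a * b)) * z)
      simpa only [z, C_neg, C_mul, map_add, map_sub, map_mul, map_neg, map_pow] using e3
  have hz : π H = 0 := by
    rw [key]
    have : (aeval fun j => conicPt a b j • π z) H
        = (π z) ^ (n + 1) * algebraMap K _ (eval (conicPt a b) H) := by
      rw [aeval_def, eval₂_eq', eval_eq', map_sum, Finset.mul_sum]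
      refine Finset.sum_congr rfl fun d hd => ?_
      have hdeg : d.degree = n + 1 := by
        have := hH (mem_support_iff.1 hd)
        rwa [Finsupp.degree_eq_weight_one]
      rw [← hdeg, Finsupp.degree_eq_sum, map_mul, map_prod]
      simp only [Algebra.smul_def, mul_pow, Finset.prod_mul_distrib, map_pow,
        Finset.prod_pow_eq_pow_sum]
      ring
    rw [this, h0, map_zero, mul_zero]
  obtain ⟨p, hp, q, hq, hpq⟩ := Submodule.mem_sup.1 (Ideal.Quotient.eq_zero_iff_mem.1 hz)
  obtain ⟨f, rfl⟩ := Ideal.mem_span_singleton'.1 hq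
  -- pass to the homogeneous components of degree `n` and `n + 1`
  refine ⟨DirectSum.decompose (homogeneousSubmodule (Fin 4) K) f n, Subtype.coe_prop _, ?_⟩
  have hp' := decompose_mem_quadLine hp (1 + n)
  rw [eq_sub_of_add_eq hpq, DirectSum.decompose_sub, DirectSum.sub_apply,
    AddSubgroupClass.coe_sub, mul_comm f,
    DirectSum.coe_decompose_mul_add_of_left_mem _ linForm_mem, add_comm 1 n,
    DirectSum.decompose_of_mem_same _ hH] at hp'
  exact hp'

/-- The degree-`n` component `G'` of `G` is congruent to every form of degree `n` that is
congruent to `G` modulo the (homogeneous) ideal of a line. -/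
lemma exists_component (G : Rp K) (n : ℕ) : ∃ G' ∈ homogeneousSubmodule (Fin 4) K n,
    ∀ (a b : K) (p : Rp K), p ∈ homogeneousSubmodule (Fin 4) K n →
      p - G ∈ quadLine a b → p - G' ∈ quadLine a b := by
  refine ⟨DirectSum.decompose (homogeneousSubmodule (Fin 4) K) G n, Subtype.coe_prop _,
    fun a b p hp h => ?_⟩
  have := decompose_mem_quadLine h n
  rwa [DirectSum.decompose_sub, DirectSum.sub_apply, AddSubgroupClass.coe_sub,
    DirectSum.decompose_of_mem_same _ hp] at this

end Line

/-! ### Elements of the Hartshorne–Rao module -/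

lemma mem_HRcomp {ι : Type} {P : ι → Ideal (Rp K)} {t : ℕ} {x : HRmod P} :
    x ∈ HRcomp P t ↔ ∃ f : ι → Rp K, (∀ i, f i ∈ homogeneousSubmodule (Fin 4) K t) ∧
      x = Submodule.Quotient.mk (fun i => Submodule.Quotient.mk (f i)) := by
  constructor
  · rintro ⟨y, hy, rfl⟩
    choose f hf hfy using fun i => hy i trivial
    refine ⟨f, hf, ?_⟩
    have : y = fun i => Submodule.Quotient.mk (f i) := funext fun i => (hfy i).symm
    rw [this]; rfl
  · rintro ⟨f, hf, rfl⟩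
    exact ⟨fun i => Submodule.Quotient.mk (f i), fun i _ => ⟨f i, hf i, rfl⟩, rfl⟩

lemma HRmk_eq_iff {ι : Type} {P : ι → Ideal (Rp K)} {f g : ι → Rp K} :
    (Submodule.Quotient.mk (fun i => Submodule.Quotient.mk (f i)) : HRmod P)
      = Submodule.Quotient.mk (fun i => Submodule.Quotient.mk (g i)) ↔
    ∃ G : Rp K, ∀ i, f i - g i - G ∈ P i := by
  rw [Submodule.Quotient.eq]
  constructor
  · rintro ⟨G, hG⟩
    refine ⟨G, fun i => ?_⟩
    have := congrFun hG i
    exact (Submodule.Quotient.eq (P i)).1 this.symm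
  · rintro ⟨G, hG⟩
    refine ⟨G, funext fun i => ?_⟩
    exact ((Submodule.Quotient.eq (P i)).2 (hG i)).symm

/-! ### Maximal rank -/

/-- The Hartshorne–Rao module of a union of `r` pairwise disjoint lines of one
ruling of the smooth quadric `Q = V(x₀x₃ - x₁x₂)` has the Weak Lefschetz
Property. -/
theorem stmt_14 {K : Type} [Field K] [IsAlgClosed K] [CharZero K]
    (r : ℕ) (hr : 1 ≤ r) (a b : Fin r → K)
    (hnz : ∀ i, (a i, b i) ≠ (0, 0))
    (hdist : ∀ i j, i ≠ j → a i * b j - a j * b i ≠ 0) :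
    ∃ L : Rp K, L ∈ homogeneousSubmodule (Fin 4) K 1 ∧ L ≠ 0 ∧
      MaxRankPow (fun i => quadLine (a i) (b i)) L 1 := by
  have hlin : ∀ i, eval (conicPt (a i) (b i)) (X 0 + X 3 : Rp K) = 0 := fun i => by
    simp [conicPt]
  have heval : ∀ (n : ℕ) (c : Fin (2 * n + 1) → K) (i : Fin r),
      eval (conicPt (a i) (b i)) (∑ k, C (c k) * conicMon K n k.1)
        = ∑ k, c k * (a i ^ k.1 * b i ^ (2 * n - k.1)) := by
    intro n c i
    rw [map_sum]
    refine Finset.sum_congr rfl fun k _ => ?_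
    rw [map_mul, eval_C, eval_conicMon _ _ (by omega)]
  refine ⟨X 0 + X 3, linForm_mem, ?_, fun t => ?_⟩
  · intro h
    have := congrArg (eval (![1, 0, 0, 0] : Fin 4 → K)) h
    simp at this
  rw [pow_one]
  rcases le_total (2 * (t + 1) + 1) r with hle | hle
  · left
    intro x hx hLx
    obtain ⟨f, hf, rfl⟩ := mem_HRcomp.1 hx
    obtain ⟨G₀, hG₀⟩ := (HRmk_eq_iff (f := fun i => (X 0 + X 3) * f i)
      (g := fun _ => (0 : Rp K))).1 hLx
    -- replace `G₀` by its component of degree `t + 1`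
    obtain ⟨G, hGmem, hG⟩ : ∃ G ∈ homogeneousSubmodule (Fin 4) K (t + 1),
        ∀ i, (X 0 + X 3) * f i - G ∈ quadLine (a i) (b i) := by
      obtain ⟨G, hGmem, hG⟩ := exists_component G₀ (t + 1)
      refine ⟨G, hGmem, fun i => hG _ _ _ ?_ (by simpa using hG₀ i)⟩
      have := IsHomogeneous.mul linForm_mem (hf i)
      rwa [add_comm 1 t] at this
    obtain ⟨c, A, F, hGc⟩ := exists_conic_form (t + 1) G hGmem
    have hq : ∀ i, eval (conicPt (a i) (b i)) (X 0 * X 3 - X 1 * X 2 : Rp K) = 0 := fun i =>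
      eval_conicPt_of_mem (quadric_mem_quadLine (hnz i))
    have hc : c = 0 := by
      refine binary_form_eq_zero hle hdist c fun i => ?_
      have h1 := eval_conicPt_of_mem (hG i)
      rw [map_sub, map_mul, hlin, zero_mul, zero_sub, neg_eq_zero, hGc, map_add, map_add,
        heval, map_mul _ (X 0 + X 3), hlin, map_mul _ _ A, hq] at h1
      simpa using h1
    have hGF : G = (X 0 + X 3) * F + (X 0 * X 3 - X 1 * X 2) * A := by
      rw [hGc, hc]; simp
    refine (HRmk_eq_iff (g := fun _ => (0 : Rp K))).2 ⟨F, fun i => ?_⟩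
    refine quadLine_cancel (hnz i) ?_
    have e : (X 0 + X 3) * (f i - 0 - F)
        = ((X 0 + X 3) * f i - G) + A * (X 0 * X 3 - X 1 * X 2) := by rw [hGF]; ring
    rw [e]
    exact Ideal.add_mem _ (hG i) (Ideal.mul_mem_left _ _ (quadric_mem_quadLine (hnz i)))
  · right
    intro y hy
    obtain ⟨g, hg, rfl⟩ := mem_HRcomp.1 hy
    obtain ⟨c, hc⟩ := binary_form_interpolate (N := 2 * (t + 1)) (2 * (t + 1) + 1 - r)
      (Nat.add_sub_of_le hle) hnz hdist
      fun i => eval (conicPt (a i) (b i)) (g i)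
    set G : Rp K := ∑ k, C (c k) * conicMon K (t + 1) k.1 with hGdef
    have hG : G ∈ homogeneousSubmodule (Fin 4) K (t + 1) := by
      refine Submodule.sum_mem _ fun k _ => ?_
      rw [← smul_eq_C_mul]
      exact Submodule.smul_mem _ _ (conicMon_mem _ _ (by omega))
    choose f hf hfg using fun i => exists_factor_of_eval_eq_zero (hnz i)
      (Submodule.sub_mem _ (hg i) hG) (by rw [map_sub, hGdef, heval, hc, sub_self])
    refine ⟨_, mem_HRcomp.2 ⟨f, hf, rfl⟩, ?_⟩
    refine (HRmk_eq_iff (f := fun i => (X 0 + X 3) * f i)).2 ⟨-G, fun i => ?_⟩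
    have e : (X 0 + X 3) * f i - g i - -G = -(g i - G - (X 0 + X 3) * f i) := by ring
    rw [e]
    exact neg_mem (hfg i)
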